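/- Let E(t) := ∫₀^{π/2} √(1 + t² sin²θ) dθ and K(t) := ∫₀^{π/2} (1 + t² sin²θ)^{-1/2} dθ. Then ∫₀^{π/2} ∫₀^{π/2} ∫₀^{π/2} sin²φ · sin³ψ · √(sin²θ · sin²φ · sin²ψ + cos²ψ) dψ dφ dθ = (8/3) · ∫₀^{∞} [ (8t⁴+8t²−1)·E(t)² − 2(4t⁴+3t²−1)·E(t)·K(t) + (2t⁴+t²−1)·K(t)² ] · t/(2t²+1)⁵ dt. -/

import Mathlib

/-!
With `tan ψ = τ` and Fubini, the left-hand side becomes `∫₀^∞ τ³ / (1 + τ²)³ · H(τ) dτ`, where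
`H(τ) = ∫₀^{π/2} sin²φ · E(τ sin φ) dφ`. The point is that `H` is a quadratic form in `E` and `K`
after the doubling `τ = sinh 2x`, `t = sinh x`:
`6 t² (1 + t²) H(τ) = (8t⁴ + 8t² - 1) E(t)² - 2 (4t⁴ + 3t² - 1) E(t) K(t) + (2t⁴ + t² - 1) K(t)²`.
Both sides of this formula belong to a solution of one 3 × 3 linear differential system in `t`: for
the moments of `E` this follows from Legendre's equation by integration by parts in `φ`, for
quadratic expressions in `E` and its derivative from Legendre's equation alone. The system is
singular at `t = 0`, but its `1/t` terms are dissipative, so a Grönwall estimate still yields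
uniqueness from the values at `0`.
-/

open Real

/-- The complete elliptic integral of the second kind with imaginary modulus:
`E(it) = ∫₀^{π/2} √(1 + t² sin²θ) dθ`. -/
noncomputable def Eimag (t : ℝ) : ℝ :=
  ∫ θ in (0:ℝ)..(π/2), Real.sqrt (1 + t ^ 2 * Real.sin θ ^ 2)

/-- The complete elliptic integral of the first kind with imaginary modulus:
`K(it) = ∫₀^{π/2} (1 + t² sin²θ)^{-1/2} dθ`. -/
noncomputable def Kimag (t : ℝ) : ℝ :=
  ∫ θ in (0:ℝ)..(π/2), (1 + t ^ 2 * Real.sin θ ^ 2) ^ (-(1/2) : ℝ)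

open MeasureTheory Set Function

section ParametricIntegral

variable {E : Type*} [NormedAddCommGroup E] [NormedSpace ℝ E]

lemma hasDerivAt_intervalIntegral_of_continuous {F F' : ℝ → ℝ → E}
    (hF : Continuous (uncurry F)) (hF' : Continuous (uncurry F'))
    (h : ∀ x θ, HasDerivAt (F · θ) (F' x θ) x) (a b x : ℝ) :
    HasDerivAt (fun y ↦ ∫ θ in a..b, F y θ) (∫ θ in a..b, F' x θ) x := by
  obtain ⟨C, hC⟩ := ((isCompact_closedBall x 1).prod
    (isCompact_uIcc (a := a) (b := b))).exists_bound_of_continuousOn hF'.continuousOn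
  refine (intervalIntegral.hasDerivAt_integral_of_dominated_loc_of_deriv_le
    (Metric.closedBall_mem_nhds x one_pos) (bound := fun _ ↦ C)
    (.of_forall fun y ↦ (hF.uncurry_left y).aestronglyMeasurable)
    ((hF.uncurry_left x).intervalIntegrable _ _) (hF'.uncurry_left x).aestronglyMeasurable
    (.of_forall fun θ hθ y hy ↦ hC (y, θ) ⟨hy, uIoc_subset_uIcc hθ⟩) (by simp)
    (.of_forall fun θ _ y _ ↦ h y θ)).2

lemma intervalIntegral_swap_of_continuous {F : ℝ → ℝ → E} (hF : Continuous (uncurry F))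
    (a b c d : ℝ) : ∫ x in a..b, ∫ y in c..d, F x y = ∫ y in c..d, ∫ x in a..b, F x y :=
  intervalIntegral_intervalIntegral_swap <|
    (hF.continuousOn.integrableOn_compact (isCompact_uIcc.prod isCompact_uIcc)).mono_set
      (prod_mono uIoc_subset_uIcc uIoc_subset_uIcc)

lemma intervalIntegral_reverse_of_continuous {F : ℝ → ℝ → ℝ → E}
    (hF : Continuous fun p : ℝ × ℝ × ℝ ↦ F p.1 p.2.1 p.2.2) (a b c d k l : ℝ) :
    ∫ x in a..b, ∫ y in c..d, ∫ z in k..l, F x y z =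
      ∫ z in k..l, ∫ y in c..d, ∫ x in a..b, F x y z := by
  have inner (x : ℝ) : ∫ y in c..d, ∫ z in k..l, F x y z = ∫ z in k..l, ∫ y in c..d, F x y z :=
    intervalIntegral_swap_of_continuous (F := F x)
      (hF.comp (by fun_prop : Continuous fun p : ℝ × ℝ ↦ (x, p.1, p.2))) _ _ _ _
  have outer (z : ℝ) : ∫ x in a..b, ∫ y in c..d, F x y z = ∫ y in c..d, ∫ x in a..b, F x y z :=
    intervalIntegral_swap_of_continuous (F := (F · · z))
      (hF.comp (by fun_prop : Continuous fun p : ℝ × ℝ ↦ (p.1, p.2, z))) _ _ _ _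
  simp only [inner, ← outer]
  refine intervalIntegral_swap_of_continuous ?_ _ _ _ _
  exact intervalIntegral.continuous_parametric_intervalIntegral_of_continuous'
    (f := fun (q : ℝ × ℝ) y ↦ F q.1 y q.2)
    (hF.comp (by fun_prop : Continuous fun q : (ℝ × ℝ) × ℝ ↦ (q.1.1, q.2, q.1.2))) _ _

lemma integral_eq_integral_Ioi_arctan (g : ℝ → E) :
    ∫ ψ in (0 : ℝ)..(π / 2), g ψ = ∫ τ in Ioi 0, (1 / (1 + τ ^ 2)) • g (arctan τ) := by
  have image : arctan '' Ioi 0 = Ioo 0 (π / 2) := by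
    ext ψ
    refine ⟨?_, fun ⟨h₀, h₁⟩ ↦
      ⟨tan ψ, tan_pos_of_pos_of_lt_pi_div_two h₀ h₁, arctan_tan (by linarith) h₁⟩⟩
    rintro ⟨τ, hτ, rfl⟩
    exact ⟨arctan_pos.2 hτ, arctan_lt_pi_div_two τ⟩
  rw [intervalIntegral.integral_of_le (by positivity), integral_Ioc_eq_integral_Ioo, ← image]
  exact integral_image_eq_integral_deriv_smul_of_monotoneOn measurableSet_Ioi
    (fun τ _ ↦ (hasDerivAt_arctan τ).hasDerivWithinAt) (arctan_mono.monotoneOn _) g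

end ParametricIntegral

section EllipticIntegrals

/-- Legendre's `Δ(θ) = √(1 - k² sin²θ)` at the imaginary modulus `k = it`: the integrand of
`Eimag`, and the reciprocal of the integrand of `Kimag`. -/
noncomputable def legendreDelta (t θ : ℝ) : ℝ := √(1 + t ^ 2 * sin θ ^ 2)

lemma legendreDelta_pos (t θ : ℝ) : 0 < legendreDelta t θ := sqrt_pos.2 (by positivity)

@[simp]
lemma legendreDelta_ne_zero (t θ : ℝ) : legendreDelta t θ ≠ 0 := (legendreDelta_pos t θ).ne'

lemma legendreDelta_sq (t θ : ℝ) : legendreDelta t θ ^ 2 = 1 + t ^ 2 * sin θ ^ 2 :=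
  sq_sqrt (by positivity)

@[fun_prop]
lemma continuous_legendreDelta : Continuous (uncurry legendreDelta) := by
  unfold legendreDelta uncurry
  fun_prop

lemma hasDerivAt_legendreDelta_modulus (t θ : ℝ) :
    HasDerivAt (legendreDelta · θ) (t * sin θ ^ 2 / legendreDelta t θ) t := by
  have radicand : HasDerivAt (fun y ↦ 1 + y ^ 2 * sin θ ^ 2) (2 * t * sin θ ^ 2) t :=
    (((hasDerivAt_pow 2 t).mul_const _).const_add 1).congr_deriv (by simp)
  exact (radicand.sqrt (by positivity)).congr_deriv (by rw [legendreDelta]; field)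

lemma hasDerivAt_legendreDelta_angle (t θ : ℝ) :
    HasDerivAt (legendreDelta t) (t ^ 2 * sin θ * cos θ / legendreDelta t θ) θ := by
  have radicand : HasDerivAt (fun y ↦ 1 + t ^ 2 * sin y ^ 2) (t ^ 2 * (2 * sin θ * cos θ)) θ :=
    ((((hasDerivAt_sin θ).pow 2).const_mul _).const_add 1).congr_deriv (by simp)
  exact (radicand.sqrt (by positivity)).congr_deriv (by rw [legendreDelta]; field)

lemma hasDerivAt_Eimag (t : ℝ) :
    HasDerivAt Eimag (∫ θ in (0 : ℝ)..(π / 2), t * sin θ ^ 2 / legendreDelta t θ) t :=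
  hasDerivAt_intervalIntegral_of_continuous (F' := fun t θ ↦ t * sin θ ^ 2 / legendreDelta t θ)
    continuous_legendreDelta (by unfold uncurry; fun_prop (disch := simp))
    (fun x θ ↦ hasDerivAt_legendreDelta_modulus x θ) _ _ _

lemma deriv_Eimag :
    deriv Eimag = fun t ↦ ∫ θ in (0 : ℝ)..(π / 2), t * sin θ ^ 2 / legendreDelta t θ :=
  funext fun t ↦ (hasDerivAt_Eimag t).deriv

lemma hasDerivAt_deriv_Eimag (t : ℝ) :
    HasDerivAt (deriv Eimag) (∫ θ in (0 : ℝ)..(π / 2), sin θ ^ 2 / legendreDelta t θ ^ 3) t := by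
  rw [deriv_Eimag]
  refine hasDerivAt_intervalIntegral_of_continuous
    (F := fun t θ ↦ t * sin θ ^ 2 / legendreDelta t θ)
    (F' := fun t θ ↦ sin θ ^ 2 / legendreDelta t θ ^ 3)
    (by unfold uncurry; fun_prop (disch := simp)) (by unfold uncurry; fun_prop (disch := simp))
    (fun x θ ↦ ?_) _ _ _
  have hΔ := legendreDelta_ne_zero x θ
  refine (((hasDerivAt_id' x).mul_const (sin θ ^ 2)).div
    (hasDerivAt_legendreDelta_modulus x θ) hΔ).congr_deriv ?_
  field_simp
  rw [legendreDelta_sq]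
  ring

lemma deriv_deriv_Eimag :
    deriv (deriv Eimag) = fun t ↦ ∫ θ in (0 : ℝ)..(π / 2), sin θ ^ 2 / legendreDelta t θ ^ 3 :=
  funext fun t ↦ (hasDerivAt_deriv_Eimag t).deriv

lemma contDiff_Eimag : ContDiff ℝ 2 Eimag := by
  refine (contDiff_succ_iff_deriv (n := 1)).2
    ⟨fun t ↦ (hasDerivAt_Eimag t).differentiableAt, by simp, contDiff_one_iff_deriv.2
      ⟨fun t ↦ (hasDerivAt_deriv_Eimag t).differentiableAt, deriv_deriv_Eimag ▸ ?_⟩⟩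
  exact intervalIntegral.continuous_parametric_intervalIntegral_of_continuous'
    (by unfold uncurry; fun_prop (disch := simp)) _ _

lemma Kimag_eq_Eimag_sub_mul_deriv (t : ℝ) : Kimag t = Eimag t - t * deriv Eimag t := by
  have hE : IntervalIntegrable (legendreDelta t) volume 0 (π / 2) :=
    Continuous.intervalIntegrable (by fun_prop) _ _
  have hE' : IntervalIntegrable (fun θ ↦ t * (t * sin θ ^ 2 / legendreDelta t θ)) volume
      0 (π / 2) := Continuous.intervalIntegrable (by fun_prop (disch := simp)) _ _
  change _ = (∫ θ in (0 : ℝ)..(π / 2), legendreDelta t θ) - _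
  rw [deriv_Eimag, ← intervalIntegral.integral_const_mul, ← intervalIntegral.integral_sub hE hE']
  refine intervalIntegral.integral_congr fun θ _ ↦ ?_
  have hΔ := legendreDelta_ne_zero t θ
  rw [rpow_neg (by positivity), ← sqrt_eq_rpow, ← legendreDelta]
  field_simp
  rw [legendreDelta_sq]
  ring

lemma hasDerivAt_sin_mul_cos_div_legendreDelta (t θ : ℝ) :
    HasDerivAt (fun y ↦ sin y * cos y / legendreDelta t y)
      ((1 - 2 * sin θ ^ 2 - t ^ 2 * sin θ ^ 4) / legendreDelta t θ ^ 3) θ := by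
  have hΔ := legendreDelta_ne_zero t θ
  refine (((hasDerivAt_sin θ).mul (hasDerivAt_cos θ)).div
    (hasDerivAt_legendreDelta_angle t θ) hΔ).congr_deriv ?_
  simp only [Pi.mul_apply]
  field_simp
  rw [legendreDelta_sq]
  linear_combination cos_sq' θ

/-- Legendre's differential equation for the complete elliptic integral of the second kind,
`(1 + u²)(u f'' + f') = u f`, transported to the imaginary modulus `iu`. -/
structure IsLegendreSolution (f : ℝ → ℝ) : Prop where
  contDiff : ContDiff ℝ 2 f
  ode (u : ℝ) : (1 + u ^ 2) * (u * deriv (deriv f) u + deriv f u) = u * f u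

lemma isLegendreSolution_Eimag : IsLegendreSolution Eimag where
  contDiff := contDiff_Eimag
  ode t := by
    have boundary : ∫ θ in (0 : ℝ)..(π / 2),
        -t * ((1 - 2 * sin θ ^ 2 - t ^ 2 * sin θ ^ 4) / legendreDelta t θ ^ 3) = 0 := by
      rw [intervalIntegral.integral_eq_sub_of_hasDerivAt
        (fun θ _ ↦ (hasDerivAt_sin_mul_cos_div_legendreDelta t θ).const_mul (-t))
        (Continuous.intervalIntegrable (by fun_prop (disch := simp)) _ _)]
      simp
    have h₀ : IntervalIntegrable (legendreDelta t) volume 0 (π / 2) :=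
      Continuous.intervalIntegrable (by fun_prop) _ _
    have h₁ : IntervalIntegrable (fun θ ↦ t * sin θ ^ 2 / legendreDelta t θ) volume 0 (π / 2) :=
      Continuous.intervalIntegrable (by fun_prop (disch := simp)) _ _
    have h₂ : IntervalIntegrable (fun θ ↦ sin θ ^ 2 / legendreDelta t θ ^ 3) volume 0 (π / 2) :=
      Continuous.intervalIntegrable (by fun_prop (disch := simp)) _ _
    rw [deriv_deriv_Eimag, deriv_Eimag, ← sub_eq_zero]
    refine Eq.trans ?_ boundary
    change _ - t * (∫ θ in (0 : ℝ)..(π / 2), legendreDelta t θ) = _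
    simp only [← intervalIntegral.integral_const_mul]
    rw [← intervalIntegral.integral_add (h₂.const_mul t) h₁,
      ← intervalIntegral.integral_const_mul,
      ← intervalIntegral.integral_sub (((h₂.const_mul t).add h₁).const_mul _) (h₀.const_mul t)]
    refine intervalIntegral.integral_congr fun θ _ ↦ ?_
    have hΔ := legendreDelta_ne_zero t θ
    field_simp
    rw [show legendreDelta t θ ^ 4 = (legendreDelta t θ ^ 2) ^ 2 by ring, legendreDelta_sq]
    ring

end EllipticIntegrals

section SineMoments

/-- The sine moment `∫₀^{π/2} sinⁿφ · g(τ sin φ) dφ` of the one-variable function `g`. -/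
noncomputable def sinMoment (n : ℕ) (g : ℝ → ℝ) (τ : ℝ) : ℝ :=
  ∫ φ in (0 : ℝ)..(π / 2), sin φ ^ n * g (τ * sin φ)

variable {f g : ℝ → ℝ}

lemma intervalIntegrable_sinMoment (n : ℕ) (hg : Continuous g) (τ a b : ℝ) :
    IntervalIntegrable (fun φ ↦ sin φ ^ n * g (τ * sin φ)) volume a b :=
  Continuous.intervalIntegrable (by fun_prop) _ _

lemma continuous_sinMoment (n : ℕ) (hg : Continuous g) : Continuous (sinMoment n g) :=
  intervalIntegral.continuous_parametric_intervalIntegral_of_continuous'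
    (by unfold uncurry; fun_prop) _ _

lemma hasDerivAt_sinMoment (n : ℕ) (hg : ContDiff ℝ 1 g) (τ : ℝ) :
    HasDerivAt (sinMoment n g) (sinMoment (n + 1) (deriv g) τ) τ := by
  have := hg.continuous_deriv le_rfl
  have := hg.continuous
  refine hasDerivAt_intervalIntegral_of_continuous (F := fun t φ ↦ sin φ ^ n * g (t * sin φ))
    (F' := fun t φ ↦ sin φ ^ (n + 1) * deriv g (t * sin φ))
    (by unfold uncurry; fun_prop) (by unfold uncurry; fun_prop) (fun t φ ↦ ?_) _ _ _
  have hd := (hg.differentiable one_ne_zero (t * sin φ)).hasDerivAt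
  exact ((hd.comp t ((hasDerivAt_id' t).mul_const _)).const_mul _).congr_deriv (by ring)

lemma sinMoment_zero_right (n : ℕ) (g : ℝ → ℝ) :
    sinMoment n g 0 = (∫ φ in (0 : ℝ)..(π / 2), sin φ ^ n) * g 0 := by
  simp [sinMoment]

lemma sinMoment_sub (n : ℕ) (hf : Continuous f) (hg : Continuous g) (τ : ℝ) :
    sinMoment n (f - g) τ = sinMoment n f τ - sinMoment n g τ := by
  simp only [sinMoment, Pi.sub_apply, mul_sub]
  exact intervalIntegral.integral_sub (intervalIntegrable_sinMoment n hf τ _ _)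
    (intervalIntegrable_sinMoment n hg τ _ _)

lemma sinMoment_id_mul (n : ℕ) (g : ℝ → ℝ) (τ : ℝ) :
    sinMoment n (id * g) τ = τ * sinMoment (n + 1) g τ := by
  simp only [sinMoment, Pi.mul_apply, id, ← intervalIntegral.integral_const_mul]
  congr! 2
  ring

lemma sinMoment_const_mul (n : ℕ) (c : ℝ) (g : ℝ → ℝ) (τ : ℝ) :
    sinMoment n (fun u ↦ c * g u) τ = c * sinMoment n g τ := by
  simp only [sinMoment, ← intervalIntegral.integral_const_mul]
  congr! 2
  ring

lemma hasDerivAt_sin_pow_mul_cos_mul_comp (n : ℕ) (hg : Differentiable ℝ g) (τ φ : ℝ) :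
    HasDerivAt (fun φ ↦ sin φ ^ (n + 1) * cos φ * g (τ * sin φ))
      ((n + 1) * (sin φ ^ n * g (τ * sin φ)) - (n + 2) * (sin φ ^ (n + 2) * g (τ * sin φ)) -
        τ * (sin φ ^ (n + 3) * deriv g (τ * sin φ) - sin φ ^ (n + 1) * deriv g (τ * sin φ)))
      φ := by
  refine ((((hasDerivAt_sin φ).pow (n + 1)).mul (hasDerivAt_cos φ)).mul
    ((hg (τ * sin φ)).hasDerivAt.comp φ ((hasDerivAt_sin φ).const_mul τ))).congr_deriv ?_
  simp only [Pi.mul_apply, Pi.pow_apply, Function.comp_apply, Nat.cast_add, Nat.cast_one,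
    Nat.add_sub_cancel]
  linear_combination ((n + 1) * sin φ ^ n * g (τ * sin φ) +
    τ * sin φ ^ (n + 1) * deriv g (τ * sin φ)) * cos_sq' φ

lemma sinMoment_recurrence (n : ℕ) (hg : ContDiff ℝ 1 g) (τ : ℝ) :
    τ * (sinMoment (n + 3) (deriv g) τ - sinMoment (n + 1) (deriv g) τ) =
      (n + 1) * sinMoment n g τ - (n + 2) * sinMoment (n + 2) g τ := by
  have hg₀ := hg.continuous
  have hg' := hg.continuous_deriv le_rfl
  have boundary := intervalIntegral.integral_eq_sub_of_hasDerivAt (a := 0) (b := π / 2)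
    (fun φ _ ↦ hasDerivAt_sin_pow_mul_cos_mul_comp n (hg.differentiable one_ne_zero) τ φ)
    (Continuous.intervalIntegrable (by fun_prop) _ _)
  have integrable (k : ℕ) {h : ℝ → ℝ} (hh : Continuous h) :=
    intervalIntegrable_sinMoment k hh τ 0 (π / 2)
  rw [intervalIntegral.integral_sub
      (((integrable n hg₀).const_mul _).sub ((integrable (n + 2) hg₀).const_mul _))
      (((integrable (n + 3) hg').sub (integrable (n + 1) hg')).const_mul _),
    intervalIntegral.integral_sub ((integrable n hg₀).const_mul _)
      ((integrable (n + 2) hg₀).const_mul _)] at boundary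
  simp only [intervalIntegral.integral_const_mul] at boundary
  rw [intervalIntegral.integral_sub (integrable (n + 3) hg') (integrable (n + 1) hg')] at boundary
  simp only [cos_pi_div_two, sin_zero, mul_zero, zero_mul, sub_zero, zero_pow n.succ_ne_zero,
    ← sinMoment.eq_def] at boundary
  linarith

end SineMoments

namespace IsLegendreSolution

variable {f : ℝ → ℝ}

lemma contDiff_deriv (hf : IsLegendreSolution f) : ContDiff ℝ 1 (deriv f) :=
  hf.contDiff.deriv'

lemma hasDerivAt (hf : IsLegendreSolution f) (u : ℝ) : HasDerivAt f (deriv f u) u :=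
  (hf.contDiff.differentiable two_ne_zero u).hasDerivAt

lemma continuous_deriv (hf : IsLegendreSolution f) : Continuous (deriv f) :=
  hf.contDiff_deriv.continuous

lemma continuous_deriv_deriv (hf : IsLegendreSolution f) : Continuous (deriv (deriv f)) :=
  hf.contDiff_deriv.continuous_deriv le_rfl

lemma deriv_zero (hf : IsLegendreSolution f) : deriv f 0 = 0 := by
  simpa using hf.ode 0

lemma hasDerivAt_deriv (hf : IsLegendreSolution f) {u : ℝ} (hu : u ≠ 0) :
    HasDerivAt (deriv f) (f u / (1 + u ^ 2) - deriv f u / u) u := by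
  refine ((hf.contDiff_deriv.differentiable one_ne_zero) u).hasDerivAt.congr_deriv ?_
  field_simp
  linarith [hf.ode u]

lemma sinMoment_ode (hf : IsLegendreSolution f) (τ : ℝ) :
    τ * sinMoment 2 (deriv (deriv f)) τ + τ ^ 3 * sinMoment 4 (deriv (deriv f)) τ +
      sinMoment 1 (deriv f) τ + τ ^ 2 * sinMoment 3 (deriv f) τ = τ * sinMoment 2 f τ := by
  have h₀ := (intervalIntegrable_sinMoment 1 hf.continuous_deriv τ 0 (π / 2))
  have h₂ := (intervalIntegrable_sinMoment 2 hf.continuous_deriv_deriv τ 0 (π / 2)).const_mul τ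
  have h₃ := (intervalIntegrable_sinMoment 3 hf.continuous_deriv τ 0 (π / 2)).const_mul (τ ^ 2)
  have h₄ := (intervalIntegrable_sinMoment 4 hf.continuous_deriv_deriv τ 0 (π / 2)).const_mul
    (τ ^ 3)
  simp only [sinMoment, ← intervalIntegral.integral_const_mul]
  rw [← intervalIntegral.integral_add h₂ h₄, ← intervalIntegral.integral_add (h₂.add h₄) h₀,
    ← intervalIntegral.integral_add ((h₂.add h₄).add h₀) h₃]
  refine intervalIntegral.integral_congr fun φ _ ↦ ?_
  linear_combination sin φ * hf.ode (τ * sin φ)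

lemma sinMoment_deriv_deriv (hf : IsLegendreSolution f) (τ : ℝ) :
    τ * (1 + τ ^ 2) * sinMoment 2 (deriv (deriv f)) τ + sinMoment 1 (deriv f) τ =
      τ * (2 * sinMoment 0 f τ - 3 * sinMoment 2 f τ) := by
  have hf₀ := hf.contDiff.continuous
  have hf' := hf.continuous_deriv
  have hf'' := hf.continuous_deriv_deriv
  have hg : ContDiff ℝ 1 (id * deriv f - fun u ↦ 2 * f u) :=
    (contDiff_id.mul hf.contDiff_deriv).sub
      (contDiff_const.mul (hf.contDiff.of_le one_le_two))
  have deriv_g : deriv (id * deriv f - fun u ↦ 2 * f u) = id * deriv (deriv f) - deriv f := by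
    ext u
    have hu := (hf.contDiff_deriv.differentiable one_ne_zero u).hasDerivAt
    rw [(((hasDerivAt_id u).mul hu).sub ((hf.hasDerivAt u).const_mul 2)).deriv]
    simp only [Pi.sub_apply, Pi.mul_apply, id]
    ring
  -- For this combination the moments of order 3 and 4 cancel against those in `sinMoment_ode`.
  have parts := sinMoment_recurrence 0 hg τ
  simp only [deriv_g, Nat.cast_zero, zero_add, one_mul] at parts
  rw [sinMoment_sub _ (continuous_id.mul hf'') hf', sinMoment_sub _ (continuous_id.mul hf'') hf',
    sinMoment_sub _ (continuous_id.mul hf') (by fun_prop),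
    sinMoment_sub _ (continuous_id.mul hf') (by fun_prop)] at parts
  simp only [sinMoment_id_mul, sinMoment_const_mul] at parts
  linear_combination hf.sinMoment_ode τ - τ * parts

end IsLegendreSolution

section HyperbolicDoubling

/-- The doubling map `sinh x ↦ sinh (2x)` in the coordinate `t = sinh x`. -/
noncomputable def sinhDouble (t : ℝ) : ℝ := 2 * t * √(1 + t ^ 2)

lemma sinhDouble_sinh (x : ℝ) : sinhDouble (sinh x) = sinh (2 * x) := by
  rw [sinhDouble, ← cosh_sq', sqrt_sq (cosh_pos x).le, sinh_two_mul]

@[simp]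
lemma sinhDouble_zero : sinhDouble 0 = 0 := by simp [sinhDouble]

lemma sinhDouble_pos {t : ℝ} (ht : 0 < t) : 0 < sinhDouble t := by
  unfold sinhDouble
  positivity

lemma one_add_sinhDouble_sq (t : ℝ) : 1 + sinhDouble t ^ 2 = (1 + 2 * t ^ 2) ^ 2 := by
  rw [sinhDouble, mul_pow, sq_sqrt (by positivity)]
  ring

lemma hasDerivAt_sqrt_one_add_sq (t : ℝ) :
    HasDerivAt (fun t ↦ √(1 + t ^ 2)) (t / √(1 + t ^ 2)) t :=
  (((hasDerivAt_pow 2 t).const_add 1).sqrt (by positivity)).congr_deriv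
    (by simp only [Nat.cast_ofNat, Nat.add_one_sub_one, pow_one]; field)

lemma hasDerivAt_sinhDouble (t : ℝ) :
    HasDerivAt sinhDouble (2 * (1 + 2 * t ^ 2) / √(1 + t ^ 2)) t := by
  refine (((hasDerivAt_id' t).const_mul 2).mul (hasDerivAt_sqrt_one_add_sq t)).congr_deriv ?_
  field_simp
  rw [sq_sqrt (by positivity)]
  ring

@[fun_prop]
lemma continuous_sinhDouble : Continuous sinhDouble := by
  unfold sinhDouble
  fun_prop

lemma monotone_sinhDouble : Monotone sinhDouble :=
  monotone_of_hasDerivAt_nonneg hasDerivAt_sinhDouble fun t ↦ by positivity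

lemma image_sinhDouble_Ioi : sinhDouble '' Ioi 0 = Ioi 0 := by
  refine (image_subset_iff.2 fun t ht ↦ sinhDouble_pos ht).antisymm fun s hs ↦ ?_
  refine ⟨sinh (arsinh s / 2), sinh_pos_iff.2 (half_pos (arsinh_pos_iff.2 hs)), ?_⟩
  simp only [sinhDouble_sinh]
  rw [mul_div_cancel₀ _ two_ne_zero, sinh_arsinh]

lemma integral_Ioi_comp_sinhDouble {E : Type*} [NormedAddCommGroup E] [NormedSpace ℝ E]
    (g : ℝ → E) : ∫ t in Ioi 0, (2 * (1 + 2 * t ^ 2) / √(1 + t ^ 2)) • g (sinhDouble t) =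
      ∫ τ in Ioi 0, g τ := by
  rw [← integral_image_eq_integral_deriv_smul_of_monotoneOn measurableSet_Ioi
    (fun t _ ↦ (hasDerivAt_sinhDouble t).hasDerivWithinAt) (monotone_sinhDouble.monotoneOn _) g,
    image_sinhDouble_Ioi]

end HyperbolicDoubling

section SingularSystem

lemma nonpos_of_hasDerivAt_le_mul {f f' : ℝ → ℝ} {a C : ℝ} (hf : ContinuousOn f (Ici a))
    (hf' : ∀ t > a, HasDerivAt f (f' t) t) (bound : ∀ t > a, f' t ≤ C * f t) (ha : f a ≤ 0)
    {t : ℝ} (ht : a ≤ t) : f t ≤ 0 := by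
  have hasDerivAt_exp_mul (s : ℝ) (hs : a < s) :
      HasDerivAt (fun s ↦ exp (-(C * s)) * f s) (exp (-(C * s)) * (f' s - C * f s)) s :=
    (((hasDerivAt_id' s).const_mul C).neg.exp.mul (hf' s hs)).congr_deriv
      (by simp only [Pi.neg_apply]; ring)
  have antitone : AntitoneOn (fun s ↦ exp (-(C * s)) * f s) (Ici a) := by
    refine antitoneOn_of_hasDerivWithinAt_nonpos (convex_Ici a) (by fun_prop)
      (f' := fun s ↦ exp (-(C * s)) * (f' s - C * f s)) (fun s hs ↦ ?_) fun s hs ↦ ?_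
    all_goals rw [interior_Ici] at hs
    · exact (hasDerivAt_exp_mul s hs).hasDerivWithinAt
    · exact mul_nonpos_of_nonneg_of_nonpos (exp_pos _).le (sub_nonpos.2 (bound s hs))
  have := (antitone self_mem_Ici ht ht).trans
    (mul_nonpos_of_nonneg_of_nonpos (exp_pos _).le ha)
  exact nonpos_of_mul_nonpos_right this (exp_pos _)

/-- A linear system on `[0, ∞)`, singular at `0`. Its unknowns stand for the moments
`x = ∫ f(τ sin φ)`, `δ = 2 √(1 + t²) dx/dτ` and `m = ∫ (sin²φ - 1/2) f(τ sin φ)` of a solution `f`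
of Legendre's equation at `τ = sinhDouble t`. -/
structure IsMomentSystemSolution (x δ m : ℝ → ℝ) : Prop where
  continuousOn_x : ContinuousOn x (Ici 0)
  continuousOn_δ : ContinuousOn δ (Ici 0)
  continuousOn_m : ContinuousOn m (Ici 0)
  hasDerivAt_x {t : ℝ} (ht : 0 < t) :
    HasDerivAt x ((1 + 2 * t ^ 2) / (1 + t ^ 2) * δ t) t
  hasDerivAt_δ {t : ℝ} (ht : 0 < t) :
    HasDerivAt δ (4 / (1 + 2 * t ^ 2) * (t * δ t + x t / 2 - 3 * m t) - δ t / t) t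
  hasDerivAt_m {t : ℝ} (ht : 0 < t) :
    HasDerivAt m ((1 + 2 * t ^ 2) / (1 + t ^ 2) * (δ t / 2 - 2 * m t / t)) t

namespace IsMomentSystemSolution

variable {x δ m x₁ δ₁ m₁ x₂ δ₂ m₂ : ℝ → ℝ}

lemma sub (h₁ : IsMomentSystemSolution x₁ δ₁ m₁) (h₂ : IsMomentSystemSolution x₂ δ₂ m₂) :
    IsMomentSystemSolution (x₁ - x₂) (δ₁ - δ₂) (m₁ - m₂) where
  continuousOn_x := h₁.continuousOn_x.sub h₂.continuousOn_x
  continuousOn_δ := h₁.continuousOn_δ.sub h₂.continuousOn_δ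
  continuousOn_m := h₁.continuousOn_m.sub h₂.continuousOn_m
  hasDerivAt_x ht := ((h₁.hasDerivAt_x ht).sub (h₂.hasDerivAt_x ht)).congr_deriv
    (by simp only [Pi.sub_apply]; ring)
  hasDerivAt_δ ht := ((h₁.hasDerivAt_δ ht).sub (h₂.hasDerivAt_δ ht)).congr_deriv
    (by simp only [Pi.sub_apply]; ring)
  hasDerivAt_m ht := ((h₁.hasDerivAt_m ht).sub (h₂.hasDerivAt_m ht)).congr_deriv
    (by simp only [Pi.sub_apply]; ring)

lemma hasDerivAt_energy (h : IsMomentSystemSolution x δ m) {t : ℝ} (ht : 0 < t) :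
    HasDerivAt (fun t ↦ x t ^ 2 + δ t ^ 2 + m t ^ 2)
      ((1 + 2 * t ^ 2) / (1 + t ^ 2) * (2 * x t * δ t + m t * δ t - 4 * m t ^ 2 / t) +
        4 / (1 + 2 * t ^ 2) * (2 * t * δ t ^ 2 + x t * δ t - 6 * m t * δ t) - 2 * δ t ^ 2 / t) t :=
  ((((h.hasDerivAt_x ht).pow 2).add ((h.hasDerivAt_δ ht).pow 2)).add
    ((h.hasDerivAt_m ht).pow 2)).congr_deriv (by
    simp only [Nat.cast_ofNat, Nat.add_one_sub_one, pow_one]; ring)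

lemma energy_deriv_le {t : ℝ} (ht : 0 < t) (x δ m : ℝ) :
    (1 + 2 * t ^ 2) / (1 + t ^ 2) * (2 * x * δ + m * δ - 4 * m ^ 2 / t) +
        4 / (1 + 2 * t ^ 2) * (2 * t * δ ^ 2 + x * δ - 6 * m * δ) - 2 * δ ^ 2 / t ≤
      24 * (x ^ 2 + δ ^ 2 + m ^ 2) := by
  have a_le : (1 + 2 * t ^ 2) / (1 + t ^ 2) ≤ 2 := by
    rw [div_le_iff₀ (by positivity)]
    linarith
  have b_le : 4 / (1 + 2 * t ^ 2) ≤ 4 := by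
    rw [div_le_iff₀ (by positivity)]
    nlinarith [sq_nonneg t]
  have bt_le : 4 / (1 + 2 * t ^ 2) * t ≤ 2 := by
    rw [div_mul_eq_mul_div, div_le_iff₀ (by positivity)]
    nlinarith [sq_nonneg (t - 1)]
  set a := (1 + 2 * t ^ 2) / (1 + t ^ 2)
  set b := 4 / (1 + 2 * t ^ 2)
  have dissipation : 0 ≤ a * (4 * m ^ 2 / t) + 2 * δ ^ 2 / t := by positivity
  have a_terms : a * (2 * x * δ + m * δ) ≤ 2 * (2 * (x ^ 2 + δ ^ 2 + m ^ 2)) :=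
    calc a * (2 * x * δ + m * δ) ≤ a * (2 * (x ^ 2 + δ ^ 2 + m ^ 2)) := by
          gcongr
          linarith [sq_nonneg (x - δ), sq_nonneg (m - δ), sq_nonneg x, sq_nonneg δ, sq_nonneg m]
      _ ≤ _ := by gcongr
  have b_terms : b * (x * δ - 6 * m * δ) ≤ 4 * (4 * (x ^ 2 + δ ^ 2 + m ^ 2)) :=
    calc b * (x * δ - 6 * m * δ) ≤ b * (4 * (x ^ 2 + δ ^ 2 + m ^ 2)) := by
          gcongr
          linarith [sq_nonneg (x - δ), sq_nonneg (m + δ), sq_nonneg x, sq_nonneg δ, sq_nonneg m]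
      _ ≤ _ := by gcongr
  have bt_terms : b * t * (2 * δ ^ 2) ≤ 2 * (2 * δ ^ 2) := by gcongr
  linarith [sq_nonneg x, sq_nonneg m]

lemma eq_zero (h : IsMomentSystemSolution x δ m) (hx : x 0 = 0) (hδ : δ 0 = 0) (hm : m 0 = 0)
    {t : ℝ} (ht : 0 ≤ t) : x t = 0 ∧ δ t = 0 ∧ m t = 0 := by
  have energy_nonpos : x t ^ 2 + δ t ^ 2 + m t ^ 2 ≤ 0 :=
    nonpos_of_hasDerivAt_le_mul (f := fun t ↦ x t ^ 2 + δ t ^ 2 + m t ^ 2)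
      (((h.continuousOn_x.pow 2).add (h.continuousOn_δ.pow 2)).add (h.continuousOn_m.pow 2))
      (fun s hs ↦ h.hasDerivAt_energy hs) (fun s hs ↦ energy_deriv_le hs _ _ _)
      (by simp [hx, hδ, hm]) ht
  refine ⟨?_, ?_, ?_⟩ <;> nlinarith [sq_nonneg (x t), sq_nonneg (δ t), sq_nonneg (m t)]

end IsMomentSystemSolution

end SingularSystem

section MomentIdentity

variable {f : ℝ → ℝ}

lemma IsLegendreSolution.isMomentSystemSolution_sinMoment (hf : IsLegendreSolution f) :
    IsMomentSystemSolution (fun t ↦ sinMoment 0 f (sinhDouble t))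
      (fun t ↦ 2 * √(1 + t ^ 2) * sinMoment 1 (deriv f) (sinhDouble t))
      (fun t ↦ sinMoment 2 f (sinhDouble t) - sinMoment 0 f (sinhDouble t) / 2) := by
  have hf₁ : ContDiff ℝ 1 f := hf.contDiff.of_le one_le_two
  have hc₀ := continuous_sinMoment 0 hf₁.continuous
  have hc₁ := continuous_sinMoment 1 hf.continuous_deriv
  have hc₂ := continuous_sinMoment 2 hf₁.continuous
  have hasDerivAt_comp {F F' : ℝ → ℝ} (hF : ∀ τ, HasDerivAt F (F' τ) τ) (t : ℝ) :=
    (hF (sinhDouble t)).comp t (hasDerivAt_sinhDouble t)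
  have r_sq (t : ℝ) : √(1 + t ^ 2) ^ 2 = 1 + t ^ 2 := sq_sqrt (by positivity)
  refine ⟨by fun_prop, by fun_prop, by fun_prop, fun {t} _ ↦ ?_, fun {t} ht ↦ ?_, fun {t} ht ↦ ?_⟩
  · refine (hasDerivAt_comp (hasDerivAt_sinMoment 0 hf₁) t).congr_deriv ?_
    field_simp
    rw [r_sq]
  · refine (((hasDerivAt_sqrt_one_add_sq t).const_mul 2).mul
      (hasDerivAt_comp (hasDerivAt_sinMoment 1 hf.contDiff_deriv) t)).congr_deriv ?_
    have ode := hf.sinMoment_deriv_deriv (sinhDouble t)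
    rw [one_add_sinhDouble_sq] at ode
    simp only [Function.comp_apply, one_add_one_eq_two]
    field_simp
    rw [sinhDouble] at ode ⊢
    linear_combination 4 * ode +
      (4 - 8 * t ^ 2) * sinMoment 1 (deriv f) (2 * t * √(1 + t ^ 2)) * r_sq t
  · refine ((hasDerivAt_comp (hasDerivAt_sinMoment 2 hf₁) t).sub
      ((hasDerivAt_comp (hasDerivAt_sinMoment 0 hf₁) t).div_const 2)).congr_deriv ?_
    have parts := sinMoment_recurrence 0 hf₁ (sinhDouble t)
    simp only [Nat.cast_zero, zero_add, one_mul, Nat.reduceAdd] at parts ⊢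
    field_simp
    rw [sinhDouble] at parts ⊢
    linear_combination √(1 + t ^ 2) * parts -
      t * (2 * sinMoment 3 (deriv f) (2 * t * √(1 + t ^ 2)) -
        sinMoment 1 (deriv f) (2 * t * √(1 + t ^ 2))) * r_sq t

lemma IsLegendreSolution.isMomentSystemSolution_quadratic (hf : IsLegendreSolution f) :
    IsMomentSystemSolution (fun t ↦ f t ^ 2 + t ^ 2 * deriv f t ^ 2)
      (fun t ↦ 2 * f t * deriv f t)
      (fun t ↦ t * f t * deriv f t -
        (t * f t + (1 + t ^ 2) * deriv f t) ^ 2 / (6 * (1 + t ^ 2))) := by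
  have hf₀ := hf.contDiff.continuous
  have hf' := hf.continuous_deriv
  refine ⟨by fun_prop, by fun_prop,
    (by fun_prop (disch := intro; positivity) : Continuous _).continuousOn,
    fun {t} ht ↦ ?_, fun {t} ht ↦ ?_, fun {t} ht ↦ ?_⟩
  all_goals
    have h₀ := hf.hasDerivAt t
    have h₁ := hf.hasDerivAt_deriv ht.ne'
    have hsq := hasDerivAt_pow 2 t
  · refine ((h₀.pow 2).add (hsq.mul (h₁.pow 2))).congr_deriv ?_
    simp only [Pi.pow_apply]
    field
  · refine ((h₀.const_mul 2).mul h₁).congr_deriv ?_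
    field
  · have hq := ((hasDerivAt_id' t).mul h₀).add ((hsq.const_add 1).mul h₁)
    refine ((((hasDerivAt_id' t).mul h₀).mul h₁).sub ((hq.pow 2).div
      ((hsq.const_add 1).const_mul 6) (by positivity))).congr_deriv ?_
    simp only [Pi.pow_apply, Pi.mul_apply, Pi.add_apply]
    field

lemma IsLegendreSolution.sinMoment_two_sinhDouble (hf : IsLegendreSolution f)
    (hf₀ : f 0 = π / 2) {t : ℝ} (ht : 0 ≤ t) :
    sinMoment 2 f (sinhDouble t) = (f t + t * deriv f t) ^ 2 / 2 -
      (t * f t + (1 + t ^ 2) * deriv f t) ^ 2 / (6 * (1 + t ^ 2)) := by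
  obtain ⟨hx, -, hm⟩ := (hf.isMomentSystemSolution_sinMoment.sub
    hf.isMomentSystemSolution_quadratic).eq_zero
      (by simp [sinMoment_zero_right, hf₀, sq]) (by simp [sinMoment_zero_right, hf.deriv_zero])
      (by simp [sinMoment_zero_right, hf.deriv_zero, mul_div_right_comm]) ht
  simp only [Pi.sub_apply] at hx hm
  linear_combination hm + hx / 2

end MomentIdentity

section HardIntegral

lemma sinMoment_two_Eimag_sinhDouble {t : ℝ} (ht : 0 ≤ t) :
    6 * t ^ 2 * (1 + t ^ 2) * sinMoment 2 Eimag (sinhDouble t) =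
      (8 * t ^ 4 + 8 * t ^ 2 - 1) * Eimag t ^ 2
        - 2 * (4 * t ^ 4 + 3 * t ^ 2 - 1) * Eimag t * Kimag t
        + (2 * t ^ 4 + t ^ 2 - 1) * Kimag t ^ 2 := by
  rw [isLegendreSolution_Eimag.sinMoment_two_sinhDouble (by simp [Eimag]) ht,
    Kimag_eq_Eimag_sub_mul_deriv]
  field

lemma sqrt_eq_cos_mul_legendreDelta (τ φ θ : ℝ) :
    √(sin θ ^ 2 * sin φ ^ 2 * sin (arctan τ) ^ 2 + cos (arctan τ) ^ 2) =
      cos (arctan τ) * legendreDelta (τ * sin φ) θ := by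
  rw [legendreDelta, ← sqrt_sq (cos_arctan_pos τ).le, ← sqrt_mul (sq_nonneg _),
    sqrt_sq (cos_arctan_pos τ).le]
  congr 1
  have sin_eq : sin (arctan τ) = τ * cos (arctan τ) := by
    rw [← tan_mul_cos (cos_arctan_pos τ).ne', tan_arctan]
  rw [sin_eq]
  ring

lemma sin_arctan_pow_three_mul_cos_arctan (τ : ℝ) :
    sin (arctan τ) ^ 3 * cos (arctan τ) = τ ^ 3 / (1 + τ ^ 2) ^ 2 := by
  rw [sin_arctan, cos_arctan]
  have hs : √(1 + τ ^ 2) ^ 4 = (1 + τ ^ 2) ^ 2 := by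
    rw [show √(1 + τ ^ 2) ^ 4 = (√(1 + τ ^ 2) ^ 2) ^ 2 by ring, sq_sqrt (by positivity)]
  rw [← hs]
  field

lemma triple_integral_eq_integral_sinMoment :
    ∫ θ in (0 : ℝ)..(π / 2), ∫ φ in (0 : ℝ)..(π / 2), ∫ ψ in (0 : ℝ)..(π / 2),
        sin φ ^ 2 * sin ψ ^ 3 * √(sin θ ^ 2 * sin φ ^ 2 * sin ψ ^ 2 + cos ψ ^ 2) =
      ∫ τ in Ioi 0, τ ^ 3 / (1 + τ ^ 2) ^ 3 * sinMoment 2 Eimag τ := by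
  rw [intervalIntegral_reverse_of_continuous (by fun_prop), integral_eq_integral_Ioi_arctan]
  congr! 2 with τ
  have inner (φ : ℝ) : ∫ θ in (0 : ℝ)..(π / 2), sin φ ^ 2 * sin (arctan τ) ^ 3 *
      √(sin θ ^ 2 * sin φ ^ 2 * sin (arctan τ) ^ 2 + cos (arctan τ) ^ 2) =
        τ ^ 3 / (1 + τ ^ 2) ^ 2 * (sin φ ^ 2 * Eimag (τ * sin φ)) := by
    change _ = _ * (_ * ∫ θ in (0 : ℝ)..(π / 2), legendreDelta (τ * sin φ) θ)
    simp only [sqrt_eq_cos_mul_legendreDelta, intervalIntegral.integral_const_mul,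
      ← sin_arctan_pow_three_mul_cos_arctan]
    ring
  simp only [inner, intervalIntegral.integral_const_mul, smul_eq_mul]
  rw [← sinMoment]
  field

end HardIntegral

/-- The 'hard' triple integral arising in the second moment of the surface area of
the projection of a unit 4-cube onto a random 3-subspace, expressed in terms of
complete elliptic integrals with imaginary modulus. -/
theorem hard_triple_integral_elliptic :
    ∫ θ in (0:ℝ)..(π/2), ∫ φ in (0:ℝ)..(π/2), ∫ ψ in (0:ℝ)..(π/2),
        Real.sin φ ^ 2 * Real.sin ψ ^ 3 *
          Real.sqrt (Real.sin θ ^ 2 * Real.sin φ ^ 2 * Real.sin ψ ^ 2 + Real.cos ψ ^ 2)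
      = (8/3) *
        ∫ t in Set.Ioi (0:ℝ),
          ((8*t^4 + 8*t^2 - 1) * Eimag t ^ 2
            - 2 * (4*t^4 + 3*t^2 - 1) * Eimag t * Kimag t
            + (2*t^4 + t^2 - 1) * Kimag t ^ 2) * t / (2*t^2 + 1)^5 := by
  rw [triple_integral_eq_integral_sinMoment, ← integral_Ioi_comp_sinhDouble, ← integral_const_mul]
  refine setIntegral_congr_fun measurableSet_Ioi fun t (ht : 0 < t) ↦ ?_
  have weight : 2 * (1 + 2 * t ^ 2) / √(1 + t ^ 2) *
      (sinhDouble t ^ 3 / (1 + sinhDouble t ^ 2) ^ 3) =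
        16 * t ^ 3 * (1 + t ^ 2) / (2 * t ^ 2 + 1) ^ 5 := by
    rw [one_add_sinhDouble_sq, sinhDouble]
    field_simp
    rw [sq_sqrt (by positivity)]
    ring
  rw [smul_eq_mul, ← mul_assoc, weight, ← sinMoment_two_Eimag_sinhDouble ht.le]
  ring
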